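/- Let M > M₁(Ω₁) and let u ∈ C²(Ω̄^ε) be the strictly k-convex solution of problem (2.1), and suppose in addition u ≥ u̲^ε in Ω^ε, where u̲^ε(x) = |x|²/(2c_{n,k}) − ε²/(2c_{n,k}) − M. Define ũ : Ω₁ → ℝ by ũ = u on Ω₁ \ B̄_ε(0) and ũ = −M on B̄_ε(0). Then ũ is continuous on Ω₁ and ũ is k-convex in the viscosity sense in Ω₁: for every quadratic polynomial q on ℝⁿ such that ũ − q attains a local maximum at some point of Ω₁, one has σ_k(D²q) ≥ 0. -/

import Mathlib

open Set Metric Filter Topology Bornology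
open scoped RealInnerProductSpace

noncomputable section

/-- Euclidean `n`-space. -/
abbrev Euc (n : ℕ) := EuclideanSpace ℝ (Fin n)

/-- The `k`-th elementary symmetric polynomial of a vector `lam ∈ ℝⁿ`. -/
def esymmVec {n : ℕ} (k : ℕ) (lam : Fin n → ℝ) : ℝ :=
  ∑ S ∈ Finset.powersetCard k (Finset.univ : Finset (Fin n)), ∏ i ∈ S, lam i

/-- `σ_k(A)`: the `k`-th elementary symmetric polynomial of the eigenvalues of a
symmetric matrix `A` (junk value `0` if `A` is not symmetric). -/
noncomputable def sigmaMat {n : ℕ} (k : ℕ) (A : Matrix (Fin n) (Fin n) ℝ) : ℝ := by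
  classical exact if h : A.IsHermitian then esymmVec k h.eigenvalues else 0

/-- The eigenvalues of the symmetric matrix `A` lie in the Gårding cone
`Γ_k = {λ : σ_j(λ) > 0, j = 1, …, k}`. -/
def InGardingCone {n : ℕ} (k : ℕ) (A : Matrix (Fin n) (Fin n) ℝ) : Prop :=
  ∃ h : A.IsHermitian, ∀ j : ℕ, 1 ≤ j → j ≤ k → 0 < esymmVec j h.eigenvalues

/-- The Hessian matrix of `u` at `x`, with derivatives taken within the set `s`. -/
noncomputable def hessianWithin {n : ℕ} (u : Euc n → ℝ) (s : Set (Euc n)) (x : Euc n) :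
    Matrix (Fin n) (Fin n) ℝ :=
  fun i j => iteratedFDerivWithin ℝ 2 u s x
    ![EuclideanSpace.single i (1:ℝ), EuclideanSpace.single j (1:ℝ)]

/-- The Hessian matrix `D²u(x)` of `u` at `x`. -/
noncomputable def hessian {n : ℕ} (u : Euc n → ℝ) (x : Euc n) : Matrix (Fin n) (Fin n) ℝ :=
  fun i j => iteratedFDeriv ℝ 2 u x
    ![EuclideanSpace.single i (1:ℝ), EuclideanSpace.single j (1:ℝ)]

/-- Operator norm of the Hessian matrix of `u` at `x` (derivatives within `s`). -/
noncomputable def hessOpNormWithin {n : ℕ} (u : Euc n → ℝ) (s : Set (Euc n)) (x : Euc n) : ℝ :=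
  ‖Matrix.toEuclideanCLM (𝕜 := ℝ) (hessianWithin u s x)‖

/-- A set has smooth boundary: it is the sublevel set of a smooth defining function
with nonvanishing differential on the boundary. -/
def HasSmoothBoundary {n : ℕ} (Ω : Set (Euc n)) : Prop :=
  ∃ ρ : Euc n → ℝ, ContDiff ℝ (⊤ : ℕ∞) ρ ∧ Ω = {x | ρ x < 0} ∧
    ∀ x ∈ frontier Ω, fderiv ℝ ρ x ≠ 0

/-- `c_{n,k} = (C(n,k))^{1/k}` where `C(n,k)` is the binomial coefficient. -/
noncomputable def cnk (n k : ℕ) : ℝ := (n.choose k : ℝ) ^ ((1:ℝ)/(k:ℝ))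

/-- The radially symmetric subsolution `|x - x₀|²/(2c_{n,k}) − ε²/(2c_{n,k}) − M`. -/
noncomputable def underSol {n : ℕ} (k : ℕ) (x₀ : Euc n) (ε M : ℝ) (x : Euc n) : ℝ :=
  ‖x - x₀‖^2 / (2 * cnk n k) - ε^2 / (2 * cnk n k) - M

/-- The closed ring `Ω̄^ε = closure (Ω₁ \ B̄_ε(x₀))`. -/
def ringSet {n : ℕ} (Ω₁ : Set (Euc n)) (x₀ : Euc n) (ε : ℝ) : Set (Euc n) :=
  closure (Ω₁ \ closedBall x₀ ε)

/-- `u` is a strictly `k`-convex solution of problem (2.1):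
`σ_k(D²u) = 1` in `Ω^ε = Ω₁ \ B̄_ε(x₀)`, `u = 0` on `∂Ω₁`, `u = −M` on `∂B_ε(x₀)`,
with `u ∈ C²(Ω̄^ε)`. -/
def IsSol {n : ℕ} (k : ℕ) (Ω₁ : Set (Euc n)) (x₀ : Euc n) (ε M : ℝ) (u : Euc n → ℝ) : Prop :=
  ContDiffOn ℝ 2 u (ringSet Ω₁ x₀ ε) ∧
  (∀ x ∈ Ω₁ \ closedBall x₀ ε,
      InGardingCone k (hessianWithin u (ringSet Ω₁ x₀ ε) x) ∧
      sigmaMat k (hessianWithin u (ringSet Ω₁ x₀ ε) x) = 1) ∧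
  (∀ x ∈ frontier Ω₁, u x = 0) ∧
  (∀ x ∈ sphere x₀ ε, u x = -M)

/-- `ψ` is a strictly `k`-convex solution of problem (2.2):
`σ_k(D²ψ) = 1` in `Ω₁`, `ψ = 0` on `∂Ω₁`, with `ψ ∈ C^∞(Ω̄₁)`. -/
def IsSol22 {n : ℕ} (k : ℕ) (Ω₁ : Set (Euc n)) (ψ : Euc n → ℝ) : Prop :=
  ContDiffOn ℝ (⊤ : ℕ∞) ψ (closure Ω₁) ∧
  (∀ x ∈ Ω₁, InGardingCone k (hessianWithin ψ (closure Ω₁) x) ∧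
      sigmaMat k (hessianWithin ψ (closure Ω₁) x) = 1) ∧
  (∀ x ∈ frontier Ω₁, ψ x = 0)

/-- `u` is a strictly `k`-convex solution of the Dirichlet problem on the convex ring
`Ω = Ω₁ \ Ω̄₂`: `σ_k(D²u) = 1` in `Ω`, `u = 0` on `∂Ω₁`, `u = −M` on `∂Ω₂`,
with `u ∈ C²(Ω̄)`. -/
def IsSolRing {n : ℕ} (k : ℕ) (Ω₁ Ω₂ : Set (Euc n)) (M : ℝ) (u : Euc n → ℝ) : Prop :=
  ContDiffOn ℝ 2 u (closure (Ω₁ \ closure Ω₂)) ∧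
  (∀ x ∈ Ω₁ \ closure Ω₂,
      InGardingCone k (hessianWithin u (closure (Ω₁ \ closure Ω₂)) x) ∧
      sigmaMat k (hessianWithin u (closure (Ω₁ \ closure Ω₂)) x) = 1) ∧
  (∀ x ∈ frontier Ω₁, u x = 0) ∧
  (∀ x ∈ frontier Ω₂, u x = -M)

/-- The extension `ũ` of `u`, equal to `−M` on the closed ball `B̄_ε(x₀)`. -/
noncomputable def extendBy {n : ℕ} (u : Euc n → ℝ) (x₀ : Euc n) (ε M : ℝ) (x : Euc n) : ℝ := by
  classical exact if x ∈ closedBall x₀ ε then -M else u x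

/-- The extension `ũ` of `u`, equal to `−M` on the set `Ω₂`. -/
noncomputable def extendOn {n : ℕ} (u : Euc n → ℝ) (Ω₂ : Set (Euc n)) (M : ℝ) (x : Euc n) : ℝ := by
  classical exact if x ∈ Ω₂ then -M else u x

/-- The quadratic polynomial with Hessian `A`, linear part `b` and constant term `c`. -/
noncomputable def quadPoly {n : ℕ} (A : Matrix (Fin n) (Fin n) ℝ) (b : Euc n) (c : ℝ)
    (x : Euc n) : ℝ :=
  (∑ i, ∑ j, A i j * x i * x j) / 2 + ⟪b, x⟫ + c


open Polynomial in
theorem splits_derivative_aux {p : ℝ[X]} (hp : p.Splits) : (derivative p).Splits := by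
  rw [splits_iff_card_roots] at hp ⊢
  have h1 := card_roots_le_derivative p
  have h2 := natDegree_derivative_le p
  have h3 := card_roots' (derivative p)
  omega

open Polynomial in
theorem laguerre_aux {p : ℝ[X]} (hp : p.Splits) (x : ℝ) :
    0 ≤ (derivative p).eval x ^ 2 - p.eval x * (derivative (derivative p)).eval x := by
  induction hp using Submonoid.closure_induction with
  | mem q hq =>
    rcases hq with ⟨a, rfl⟩ | ⟨a, rfl⟩ <;> simp
  | one => simp
  | mul f g _ _ hf hg =>
    simp only [derivative_mul, derivative_add, eval_add, eval_mul]
    nlinarith [mul_nonneg (sq_nonneg (f.eval x)) hg, mul_nonneg (sq_nonneg (g.eval x)) hf]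

open Polynomial in
theorem newton_aux {p : ℝ[X]} (hp : p.Splits) (m : ℕ) :
    p.coeff m * p.coeff (m + 2) ≤ p.coeff (m + 1) ^ 2 := by
  have hs : ∀ m, (derivative^[m] p).Splits := by
    intro m
    induction m with
    | zero => exact hp
    | succ m ih => rw [Function.iterate_succ_apply']; exact splits_derivative_aux ih
  have h := laguerre_aux (hs m) 0
  rw [← Function.iterate_succ_apply' derivative, ← Function.iterate_succ_apply' derivative,
    ← coeff_zero_eq_eval_zero, ← coeff_zero_eq_eval_zero, ← coeff_zero_eq_eval_zero,
    coeff_iterate_derivative, coeff_iterate_derivative, coeff_iterate_derivative] at h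
  simp only [zero_add, Nat.descFactorial_self, Nat.factorial_succ, nsmul_eq_mul, Nat.succ_eq_add_one] at h
  push_cast at h
  have hf : (0:ℝ) < (m.factorial : ℝ) := by exact_mod_cast m.factorial_pos
  set a := p.coeff m
  set b := p.coeff (m+1)
  set c := p.coeff (m+2)
  have hm : (0:ℝ) ≤ m := by positivity
  have h2 : 0 ≤ ((m.factorial : ℝ)^2 * (m+1)) * ((m+1) * b^2 - (m+2) * (a * c)) := by
    have : ((m:ℝ)+1+1) = m + 2 := by ring
    rw [this] at h
    nlinarith [h]
  have h3 : 0 ≤ (m+1) * b^2 - (m+2) * (a * c) := by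
    by_contra hneg
    push Not at hneg
    have : ((m.factorial : ℝ)^2 * (m+1)) > 0 := by positivity
    nlinarith
  by_contra hlt
  push Not at hlt
  nlinarith [sq_nonneg b]

open Polynomial in
/-- generating polynomial -/
def genPoly {n : ℕ} (S : Finset (Fin n)) (lam : Fin n → ℝ) : ℝ[X] :=
  ∏ i ∈ S, (1 + C (lam i) * X)

open Polynomial in
theorem esymmVec_eq {n : ℕ} (k : ℕ) (lam : Fin n → ℝ) :
    esymmVec k lam = (genPoly Finset.univ lam).coeff k := by
  unfold genPoly esymmVec
  rw [Finset.prod_one_add, finsetSum_coeff, Finset.powersetCard_eq_filter, Finset.sum_filter]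
  refine Finset.sum_congr rfl fun t _ => ?_
  rw [Finset.prod_mul_distrib, Finset.prod_const, ← map_prod, coeff_C_mul_X_pow]
  simp [eq_comm]

open Polynomial in
theorem genPoly_splits {n : ℕ} (S : Finset (Fin n)) (lam : Fin n → ℝ) :
    (genPoly S lam).Splits := by
  unfold genPoly
  refine Splits.prod fun i _ => ?_
  apply Splits.of_natDegree_le_one
  compute_degree

open Polynomial in
theorem coeff_split {n : ℕ} (lam : Fin n → ℝ) (i : Fin n) (t : ℝ) (j : ℕ) :
    (genPoly Finset.univ (Function.update lam i t)).coeff (j+1) =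
      (genPoly (Finset.univ.erase i) lam).coeff (j+1)
        + t * (genPoly (Finset.univ.erase i) lam).coeff j := by
  have : genPoly Finset.univ (Function.update lam i t) =
      (1 + C t * X) * genPoly (Finset.univ.erase i) lam := by
    unfold genPoly
    rw [← Finset.mul_prod_erase _ _ (Finset.mem_univ i)]
    congr 1
    · simp
    · refine Finset.prod_congr rfl fun x hx => ?_
      rw [Function.update_of_ne (Finset.ne_of_mem_erase hx)]
  rw [this, add_mul, one_mul, mul_assoc, coeff_add, coeff_C_mul, coeff_X_mul]

theorem gen_zero {n : ℕ} (S : Finset (Fin n)) (lam : Fin n → ℝ) :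
    (genPoly S lam).coeff 0 = 1 := by
  unfold genPoly
  simp [Polynomial.coeff_zero_prod]

theorem garding_update {n : ℕ} (k : ℕ) (lam : Fin n → ℝ)
    (h : ∀ j : ℕ, 1 ≤ j → j ≤ k → 0 < esymmVec j lam) (i : Fin n) (t : ℝ) (ht : lam i ≤ t) :
    ∀ j : ℕ, 1 ≤ j → j ≤ k → 0 < esymmVec j (Function.update lam i t) := by
  have hg : ∀ j, j < k → 0 < (genPoly (Finset.univ.erase i) lam).coeff j := by
    intro j
    induction j with
    | zero => intro _; rw [gen_zero]; norm_num
    | succ j ih =>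
      intro hj
      have h0 := ih (by omega)
      have h1 := h (j+1) (by omega) (by omega)
      have h2 := h (j+1+1) (by omega) (by omega)
      rw [esymmVec_eq, ← Function.update_eq_self i lam, coeff_split] at h1 h2
      have hN := newton_aux (genPoly_splits (Finset.univ.erase i) lam) j
      by_contra hneg
      push Not at hneg
      rw [show j + 2 = j + 1 + 1 from rfl] at hN
      set a := (genPoly (Finset.univ.erase i) lam).coeff j
      set b := (genPoly (Finset.univ.erase i) lam).coeff (j+1)
      set c := (genPoly (Finset.univ.erase i) lam).coeff (j+1+1)
      have e1 : a * (c + lam i * b) > 0 := mul_pos h0 h2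
      have e2 : 0 ≤ (-b) * (b + lam i * a) := mul_nonneg (by linarith) h1.le
      nlinarith
  intro j hj1 hjk
  obtain ⟨j, rfl⟩ : ∃ m, j = m + 1 := ⟨j - 1, by omega⟩
  have h1 := h (j+1) (by omega) hjk
  have h0 := hg j (by omega)
  rw [esymmVec_eq, ← Function.update_eq_self i lam, coeff_split] at h1
  rw [esymmVec_eq, coeff_split]
  nlinarith

theorem garding_mono {n : ℕ} (k : ℕ) (lam mu : Fin n → ℝ)
    (h : ∀ j : ℕ, 1 ≤ j → j ≤ k → 0 < esymmVec j lam) (hle : ∀ i, lam i ≤ mu i) :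
    ∀ j : ℕ, 1 ≤ j → j ≤ k → 0 < esymmVec j mu := by
  classical
  have key : ∀ S : Finset (Fin n), ∀ j : ℕ, 1 ≤ j → j ≤ k →
      0 < esymmVec j (S.piecewise mu lam) := by
    intro S
    induction S using Finset.induction_on with
    | empty => simpa using h
    | insert a S ha ih =>
      rw [Finset.piecewise_insert]
      apply garding_update k _ ih
      rw [Finset.piecewise_eq_of_notMem _ _ _ ha]
      exact hle a
  simpa using key Finset.univ

/-- quadratic form -/
def qf {n : ℕ} (A : Matrix (Fin n) (Fin n) ℝ) (x : Euc n) : ℝ := ∑ i, ∑ j, A i j * x i * x j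

theorem qf_eq_inner {n : ℕ} (A : Matrix (Fin n) (Fin n) ℝ) (x : Euc n) :
    qf A x = ⟪x, Matrix.toEuclideanLin A x⟫ := by
  simp only [qf, PiLp.inner_apply, Matrix.toEuclideanLin, Matrix.toLpLin_apply, Matrix.mulVec, dotProduct]
  simp [Finset.sum_mul]
  refine Finset.sum_congr rfl fun i _ => Finset.sum_congr rfl fun j _ => by ring

theorem qf_eq_sum {n : ℕ} {A : Matrix (Fin n) (Fin n) ℝ} (h : A.IsHermitian) (x : Euc n) :
    qf A x = ∑ j, h.eigenvalues j * ⟪h.eigenvectorBasis j, x⟫ ^ 2 := by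
  rw [qf_eq_inner, ← h.eigenvectorBasis.sum_inner_mul_inner]
  refine Finset.sum_congr rfl fun j _ => ?_
  have hs := Matrix.isSymmetric_toEuclideanLin_iff.mpr h
  have h1 : Matrix.toEuclideanLin A (h.eigenvectorBasis j)
      = h.eigenvalues j • h.eigenvectorBasis j := by
    have := h.mulVec_eigenvectorBasis j
    ext l
    simpa using congrFun this l
  have h2 : ⟪h.eigenvectorBasis j, Matrix.toEuclideanLin A x⟫
      = h.eigenvalues j * ⟪h.eigenvectorBasis j, x⟫ := by
    rw [← hs, h1, real_inner_smul_left]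
  rw [h2, real_inner_comm]
  ring

theorem weyl_mono {n : ℕ} {A B : Matrix (Fin n) (Fin n) ℝ} (hA : A.IsHermitian)
    (hB : B.IsHermitian) (hle : ∀ x, qf B x ≤ qf A x) (i : Fin n) :
    hB.eigenvalues i ≤ hA.eigenvalues i := by
  classical
  obtain ⟨s, hsA, hsB⟩ : ∃ s : Fin n → Fin (Fintype.card (Fin n)),
      (∀ j l, s j ≤ s l → hA.eigenvalues l ≤ hA.eigenvalues j) ∧
      (∀ j l, s j ≤ s l → hB.eigenvalues l ≤ hB.eigenvalues j) :=
    ⟨_, fun j l hh => hA.eigenvalues₀_antitone hh, fun j l hh => hB.eigenvalues₀_antitone hh⟩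
  let L : Euc n →ₗ[ℝ] (Fin n → ℝ) := LinearMap.pi fun j =>
    if s i < s j then (innerₛₗ ℝ (hB.eigenvectorBasis j))
    else if s j < s i then (innerₛₗ ℝ (hA.eigenvectorBasis j)) else 0
  have hns : ¬ Function.Surjective L := by
    intro hsur
    obtain ⟨x, hx⟩ := hsur (fun _ => 1)
    have := congrFun hx i
    simp [L] at this
  have hni : ¬ Function.Injective L := by
    intro hin
    apply hns
    exact (LinearMap.injective_iff_surjective_of_finrank_eq_finrank (by simp)).mp hin
  rw [← LinearMap.ker_eq_bot, Submodule.eq_bot_iff] at hni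
  push Not at hni
  obtain ⟨x, hx, hx0⟩ := hni
  rw [LinearMap.mem_ker] at hx
  have hxB : ∀ j, s i < s j → ⟪hB.eigenvectorBasis j, x⟫ = 0 := by
    intro j hj
    have := congrFun hx j
    simpa [L, hj] using this
  have hxA : ∀ j, s j < s i → ⟪hA.eigenvectorBasis j, x⟫ = 0 := by
    intro j hj
    have := congrFun hx j
    simpa [L, hj, hj.not_gt] using this
  have hnorm : ∀ b : OrthonormalBasis (Fin n) ℝ (Euc n), ∑ j, ⟪b j, x⟫ ^ 2 = ‖x‖ ^ 2 := by
    intro b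
    rw [← real_inner_self_eq_norm_sq, ← b.sum_inner_mul_inner]
    refine Finset.sum_congr rfl fun j _ => ?_
    rw [real_inner_comm x]; ring
  have h1 : hB.eigenvalues i * ‖x‖ ^ 2 ≤ qf B x := by
    rw [qf_eq_sum hB, ← hnorm hB.eigenvectorBasis, Finset.mul_sum]
    refine Finset.sum_le_sum fun j _ => ?_
    rcases lt_or_ge (s i) (s j) with hj | hj
    · simp [hxB j hj]
    · exact mul_le_mul_of_nonneg_right (hsB _ _ hj) (sq_nonneg _)
  have h2 : qf A x ≤ hA.eigenvalues i * ‖x‖ ^ 2 := by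
    rw [qf_eq_sum hA, ← hnorm hA.eigenvectorBasis, Finset.mul_sum]
    refine Finset.sum_le_sum fun j _ => ?_
    rcases lt_or_ge (s j) (s i) with hj | hj
    · simp [hxA j hj]
    · exact mul_le_mul_of_nonneg_right (hsA _ _ hj) (sq_nonneg _)
  have h3 : 0 < ‖x‖ ^ 2 := by positivity
  have := hle x
  nlinarith

theorem sigma_nonneg_of_ge {n k : ℕ} (hk : 1 ≤ k) {A B : Matrix (Fin n) (Fin n) ℝ}
    (hA : A.IsHermitian) (hB : InGardingCone k B) (hle : ∀ x, qf B x ≤ qf A x) :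
    0 ≤ sigmaMat k A := by
  obtain ⟨h, hB⟩ := hB
  unfold sigmaMat
  rw [dif_pos hA]
  exact (garding_mono k _ _ hB (weyl_mono hA h hle) k hk le_rfl).le

theorem sigma_nonneg_of_psd {n k : ℕ} {A : Matrix (Fin n) (Fin n) ℝ}
    (hA : A.IsHermitian) (hle : ∀ x, 0 ≤ qf A x) :
    0 ≤ sigmaMat k A := by
  unfold sigmaMat
  rw [dif_pos hA]
  refine Finset.sum_nonneg fun S _ => Finset.prod_nonneg fun i _ => ?_
  have := hle (hA.eigenvectorBasis i)
  rw [qf_eq_sum hA] at this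
  simpa [OrthonormalBasis.inner_eq_ite] using this


theorem second_deriv_nonpos {f : ℝ → ℝ} (hc : ContinuousAt f 0) (hmax : IsLocalMax f 0) :
    deriv (deriv f) 0 ≤ 0 := by
  by_contra hpos
  push Not at hpos
  have hmin := isLocalMin_of_deriv_deriv_pos hpos hmax.deriv_eq_zero hc
  have hconst : f =ᶠ[𝓝 0] fun _ => f 0 := by
    filter_upwards [hmin, hmax] with x h1 h2 using le_antisymm h2 h1
  have := hconst.deriv.deriv_eq
  simp at this
  linarith

theorem quad_line {n : ℕ} (A : Matrix (Fin n) (Fin n) ℝ) (b : Euc n) (c : ℝ) (x v : Euc n) :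
    ∃ β : ℝ, ∀ t : ℝ, quadPoly A b c (x + t • v) =
      quadPoly A b c x + β * t + qf A v / 2 * t ^ 2 := by
  refine ⟨(∑ i, ∑ j, (A i j * x i * v j + A i j * v i * x j)) / 2 + ⟪b, v⟫, fun t => ?_⟩
  have : ∑ i, ∑ j, A i j * (x + t • v) i * (x + t • v) j =
      ∑ i, ∑ j, A i j * x i * x j + t * ∑ i, ∑ j, (A i j * x i * v j + A i j * v i * x j)
        + t ^ 2 * qf A v := by
    simp only [qf, Finset.mul_sum, ← Finset.sum_add_distrib]
    refine Finset.sum_congr rfl fun i _ => Finset.sum_congr rfl fun j _ => ?_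
    simp
    ring
  unfold quadPoly
  rw [this, inner_add_right, real_inner_smul_right]
  ring

theorem second_order {n : ℕ} (A : Matrix (Fin n) (Fin n) ℝ) (b : Euc n) (c : ℝ) (x v : Euc n)
    (w : Euc n → ℝ) (hw : ContDiffAt ℝ 2 w x)
    (hmax : IsLocalMax (fun y => w y - quadPoly A b c y) x) :
    iteratedFDeriv ℝ 2 w x ![v, v] ≤ qf A v := by
  obtain ⟨β, hβ⟩ := quad_line A b c x v
  set q0 := quadPoly A b c x
  have hl : Continuous (fun t : ℝ => x + t • v) := by fun_prop
  have hl' : ∀ t : ℝ, HasDerivAt (fun t : ℝ => x + t • v) v t := by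
    intro t
    simpa using ((hasDerivAt_id t).smul_const v).const_add x
  have hlt : Tendsto (fun t : ℝ => x + t • v) (𝓝 0) (𝓝 x) := by
    have := hl.tendsto 0
    simpa using this
  have hm : IsLocalMax (fun t : ℝ => w (x + t • v) - (q0 + β * t + qf A v / 2 * t ^ 2)) 0 := by
    have h := hlt.eventually hmax
    filter_upwards [h] with t ht
    rw [← hβ t, ← hβ 0]
    simpa using ht
  have hd : ∀ᶠ t in 𝓝 (0:ℝ), HasDerivAt (fun t : ℝ => w (x + t • v)) (fderiv ℝ w (x + t • v) v) t := by
    have h1 : ∀ᶠ y in 𝓝 x, DifferentiableAt ℝ w y := by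
      filter_upwards [hw.eventually (by simp)] with y hy using hy.differentiableAt (by simp)
    filter_upwards [hlt.eventually h1] with t ht
    exact ht.hasFDerivAt.comp_hasDerivAt t (hl' t)
  have hd2 : HasDerivAt (fun t : ℝ => fderiv ℝ w (x + t • v) v) (fderiv ℝ (fderiv ℝ w) x v v) 0 := by
    have h1 : DifferentiableAt ℝ (fderiv ℝ w) x :=
      (hw.fderiv_right (m := 1) (by norm_num)).differentiableAt (by simp)
    have h2 : HasFDerivAt (fderiv ℝ w) (fderiv ℝ (fderiv ℝ w) x) (x + (0:ℝ) • v) := by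
      simpa using h1.hasFDerivAt
    have h3 := h2.comp_hasDerivAt 0 (hl' 0)
    exact h3.clm_apply (hasDerivAt_const 0 v) |>.congr_deriv (by simp)
  have hf1 : deriv (fun t : ℝ => w (x + t • v) - (q0 + β * t + qf A v / 2 * t ^ 2)) =ᶠ[𝓝 0]
      fun t => fderiv ℝ w (x + t • v) v - (β + qf A v * t) := by
    filter_upwards [hd] with t ht
    have h2 : HasDerivAt (fun t : ℝ => q0 + β * t + qf A v / 2 * t ^ 2) (β + qf A v * t) t := by
      have := (((hasDerivAt_id t).const_mul β).const_add q0).add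
        (((hasDerivAt_id t).pow 2).const_mul (qf A v / 2))
      refine this.congr_deriv ?_
      simp; ring
    exact (ht.sub h2).deriv
  have hf2 : deriv (deriv (fun t : ℝ => w (x + t • v) - (q0 + β * t + qf A v / 2 * t ^ 2))) 0
      = fderiv ℝ (fderiv ℝ w) x v v - qf A v := by
    rw [hf1.deriv_eq]
    have h2 : HasDerivAt (fun t : ℝ => β + qf A v * t) (qf A v) 0 := by
      simpa using ((hasDerivAt_id (0:ℝ)).const_mul (qf A v)).const_add β
    exact (hd2.sub h2).deriv
  have hcont : ContinuousAt (fun t : ℝ => w (x + t • v) - (q0 + β * t + qf A v / 2 * t ^ 2)) 0 := by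
    refine hd.self_of_nhds.continuousAt.sub (by fun_prop)
  have := second_deriv_nonpos hcont hm
  rw [hf2] at this
  rw [iteratedFDeriv_two_apply]
  simpa using this

theorem qf_hessian {n : ℕ} (w : Euc n → ℝ) (x v : Euc n) :
    qf (hessian w x) v = iteratedFDeriv ℝ 2 w x ![v, v] := by
  have hv : v = ∑ i, v i • EuclideanSpace.single i (1:ℝ) := by
    ext j; simp [Finset.sum_apply, Pi.single_apply]
  unfold qf hessian
  simp only [iteratedFDeriv_two_apply, Matrix.cons_val_zero, Matrix.cons_val_one]
  conv_rhs => rw [hv]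
  simp only [map_sum, map_smul, sum_apply, smul_apply, smul_eq_mul, Finset.mul_sum]
  rw [Finset.sum_comm]
  refine Finset.sum_congr rfl fun i _ => Finset.sum_congr rfl fun j _ => by ring

theorem statement15 {n k : ℕ} (hk : 1 ≤ k) (hkn : k ≤ n)
    (Ω₁ : Set (Euc n)) (hΩo : IsOpen Ω₁) (hΩconv : Convex ℝ Ω₁)
    (hΩb : IsBounded Ω₁) (hΩs : HasSmoothBoundary Ω₁)
    (ε₀ : ℝ) (hε₀ : 0 < ε₀) (hball : closedBall (0 : Euc n) ε₀ ⊆ Ω₁)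
    (ψ : Euc n → ℝ) (hψ : IsSol22 k Ω₁ ψ)
    (M₁ : ℝ) (hM₁ : 0 < M₁) (hM₁ψ : ∀ x ∈ closure Ω₁, -ψ x < M₁)
    (hM₁sub : ∀ ε ∈ Ioo (0:ℝ) ε₀, ∀ x ∈ frontier Ω₁, underSol k (0 : Euc n) ε M₁ x ≤ 0)
    (M : ℝ) (hM : M₁ < M)
    (ε : ℝ) (hε : ε ∈ Ioo (0:ℝ) ε₀)
    (u : Euc n → ℝ) (hu : IsSol k Ω₁ (0 : Euc n) ε M u)
    (hsub : ∀ x ∈ Ω₁ \ closedBall (0 : Euc n) ε, underSol k (0 : Euc n) ε M x ≤ u x) :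
    ContinuousOn (extendBy u (0 : Euc n) ε M) Ω₁ ∧
    ∀ A : Matrix (Fin n) (Fin n) ℝ, A.IsHermitian → ∀ (b : Euc n) (c : ℝ),
      (∃ x₀ ∈ Ω₁, IsLocalMax
        (fun x => extendBy u (0 : Euc n) ε M x - quadPoly A b c x) x₀) →
      0 ≤ sigmaMat k A := by
  have hε0 : (0:ℝ) < ε := hε.1
  obtain ⟨hC2, hcone, -, hsph⟩ := hu
  have hextin : ∀ x ∈ closedBall (0 : Euc n) ε, extendBy u (0 : Euc n) ε M x = -M := by
    intro x hx
    unfold extendBy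
    rw [if_pos hx]
  have hextout : ∀ x, x ∉ closedBall (0 : Euc n) ε → extendBy u (0 : Euc n) ε M x = u x := by
    intro x hx
    unfold extendBy
    rw [if_neg hx]
  have hUo : IsOpen (Ω₁ \ closedBall (0 : Euc n) ε) := hΩo.sdiff isClosed_closedBall
  constructor
  · have h1 : ContinuousOn (extendBy u (0 : Euc n) ε M) (closedBall (0 : Euc n) ε) :=
      continuousOn_const.congr hextin
    have h2 : ContinuousOn (extendBy u (0 : Euc n) ε M) (ringSet Ω₁ (0 : Euc n) ε) := by
      refine hC2.continuousOn.congr fun x hx => ?_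
      by_cases hxb : x ∈ closedBall (0 : Euc n) ε
      · rw [hextin x hxb, hsph x]
        rw [← closedBall_sdiff_ball]
        refine ⟨hxb, fun hb => ?_⟩
        obtain ⟨y, hy1, hy2⟩ := mem_closure_iff.mp hx _ isOpen_ball hb
        exact hy2.2 (ball_subset_closedBall hy1)
      · exact hextout x hxb
    have h3 := h1.union_of_isClosed h2 isClosed_closedBall isClosed_closure
    refine h3.mono fun x hx => ?_
    by_cases hxb : x ∈ closedBall (0 : Euc n) ε
    · exact Or.inl hxb
    · exact Or.inr (subset_closure ⟨hx, hxb⟩)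
  · rintro A hA b c ⟨x, hx, hmax⟩
    by_cases hxb : x ∈ closedBall (0 : Euc n) ε
    · refine sigma_nonneg_of_psd hA fun v => ?_
      have hcn : 0 < cnk n k := by
        unfold cnk
        have := Nat.choose_pos hkn
        positivity
      have hmax' : IsLocalMax (fun y => (fun _ => -M : Euc n → ℝ) y - quadPoly A b c y) x := by
        filter_upwards [hmax, hΩo.mem_nhds hx] with y hy hyΩ
        rw [hextin x hxb] at hy
        have hge : -M ≤ extendBy u (0 : Euc n) ε M y := by
          by_cases hyb : y ∈ closedBall (0 : Euc n) ε
          · rw [hextin y hyb]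
          · rw [hextout y hyb]
            refine le_trans ?_ (hsub y ⟨hyΩ, hyb⟩)
            unfold underSol
            rw [sub_zero]
            have hlt : ε < ‖y‖ := by simpa using hyb
            have : ε ^ 2 / (2 * cnk n k) ≤ ‖y‖ ^ 2 / (2 * cnk n k) := by gcongr
            linarith
        linarith
      have := second_order A b c x v (fun _ => -M) contDiffAt_const hmax'
      simpa [iteratedFDeriv_two_apply] using this
    · have hU : Ω₁ \ closedBall (0 : Euc n) ε ∈ 𝓝 x := hUo.mem_nhds ⟨hx, hxb⟩
      have hS : ringSet Ω₁ (0 : Euc n) ε ∈ 𝓝 x := mem_of_superset hU subset_closure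
      have hess : hessianWithin u (ringSet Ω₁ (0 : Euc n) ε) x = hessian u x := by
        unfold hessianWithin hessian
        rw [← iteratedFDerivWithin_univ,
          iteratedFDerivWithin_congr_set (eventuallyEq_univ.mpr hS)]
      have hc := (hcone x ⟨hx, hxb⟩).1
      rw [hess] at hc
      refine sigma_nonneg_of_ge hk hA hc fun v => ?_
      rw [qf_hessian]
      refine second_order A b c x v u (hC2.contDiffAt hS) ?_
      filter_upwards [hmax, hU] with y hy hyU
      rw [hextout x hxb, hextout y hyU.2] at hy
      exact hy
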